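/- arXiv:1910.01772 — 2 statements merged into one kernel-verified Lean document; each statement's English description precedes it below -/
import Mathlib

section
/- Let E be a real inner product space, let ε ∈ (0, π), let a ≥ 3 be a real number with 1/(a − 1) ≤ sin(ε/2), and let s ≥ 1 be an integer. Suppose u and v are unit vectors in E, and for each i ∈ {0, …, s−1} and j ∈ {1, 2} suppose w_i^j ∈ E satisfies ‖w_i^j‖ ≤ 1. If a^s·(u + v) + Σ_{j=1}^{2} Σ_{i=0}^{s-1} a^i · w_i^j = 0, then π − θ < ε, where θ ∈ [0, π] is the angle between u and v. -/
/-!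
Balancing at the vertex gives `a ^ s * ‖u + v‖ ≤ 2 * ∑ i < s, a ^ i < 2 * a ^ s / (a - 1)`, because
the geometric growth of the weights lets the top weight dominate all the lower ones together. For
unit vectors at angle `θ`, `‖u + v‖ = 2 * cos (θ / 2)`, so `sin ((π - θ) / 2) = cos (θ / 2)` is less
than `1 / (a - 1)`, which makes `π - θ` small.
-/

open Finset InnerProductGeometry

theorem geom_sum_lt_pow_div_sub_one {K : Type*} [Field K] [LinearOrder K] [IsStrictOrderedRing K]
    {a : K} (ha : 1 < a) (s : ℕ) : ∑ i ∈ range s, a ^ i < a ^ s / (a - 1) := by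
  rw [geom_sum_eq ha.ne']
  exact div_lt_div_of_pos_right (sub_one_lt _) (sub_pos.mpr ha)

section NormedSpace

variable {ι E : Type*} [SeminormedAddCommGroup E] [NormedSpace ℝ E]

theorem norm_sum_smul_le_sum_of_norm_le_one {t : Finset ι} {c : ι → ℝ} {w : ι → E}
    (hc : ∀ i ∈ t, 0 ≤ c i) (hw : ∀ i ∈ t, ‖w i‖ ≤ 1) : ‖∑ i ∈ t, c i • w i‖ ≤ ∑ i ∈ t, c i :=
  norm_sum_le_of_le _ fun i hi => by
    rw [norm_smul, Real.norm_of_nonneg (hc i hi)]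
    exact mul_le_of_le_one_right (hc i hi) (hw i hi)

theorem norm_lt_card_div_of_pow_smul_add_sum_eq_zero [Fintype ι] [Nonempty ι] {a : ℝ} (ha : 1 < a)
    {s : ℕ} {x : E} {w : ι → Fin s → E} (hw : ∀ j i, ‖w j i‖ ≤ 1)
    (h : a ^ s • x + ∑ j, ∑ i : Fin s, a ^ (i : ℕ) • w j i = 0) :
    ‖x‖ < Fintype.card ι / (a - 1) := by
  have hpow : 0 < a ^ s := by positivity
  have hrow (j : ι) : ‖∑ i : Fin s, a ^ (i : ℕ) • w j i‖ ≤ ∑ i ∈ range s, a ^ i := by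
    rw [← Fin.sum_univ_eq_sum_range (a ^ ·)]
    exact norm_sum_smul_le_sum_of_norm_le_one (fun _ _ => by positivity) fun i _ => hw j i
  refine lt_of_mul_lt_mul_left ?_ hpow.le
  calc a ^ s * ‖x‖ = ‖a ^ s • x‖ := by rw [norm_smul, Real.norm_of_nonneg hpow.le]
    _ = ‖∑ j, ∑ i : Fin s, a ^ (i : ℕ) • w j i‖ := by rw [eq_neg_of_add_eq_zero_left h, norm_neg]
    _ ≤ ∑ _j : ι, ∑ i ∈ range s, a ^ i := norm_sum_le_of_le _ fun j _ => hrow j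
    _ < ∑ _j : ι, a ^ s / (a - 1) :=
      sum_lt_sum_of_nonempty univ_nonempty fun _ _ => geom_sum_lt_pow_div_sub_one ha s
    _ = a ^ s * (Fintype.card ι / (a - 1)) := by
      rw [sum_const, card_univ, nsmul_eq_mul, mul_div_left_comm]

end NormedSpace

theorem pi_sub_lt_of_cos_half_lt_sin_half {θ ε : ℝ} (hθ : 0 ≤ θ) (hε : -Real.pi ≤ ε)
    (h : Real.cos (θ / 2) < Real.sin (ε / 2)) : Real.pi - θ < ε := by
  rw [← Real.cos_pi_div_two_sub] at h
  contrapose! h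
  exact Real.cos_le_cos_of_nonneg_of_le_pi (by linarith) (by linarith) (by linarith)

section InnerProductSpace

variable {E : Type*} [NormedAddCommGroup E] [InnerProductSpace ℝ E]

theorem norm_add_eq_two_mul_norm_mul_cos_half_angle {u v : E} (h : ‖u‖ = ‖v‖) :
    ‖u + v‖ = 2 * ‖u‖ * Real.cos (angle u v / 2) := by
  have hcos : 0 ≤ Real.cos (angle u v / 2) :=
    Real.cos_nonneg_of_neg_pi_div_two_le_of_le
      (by linarith [angle_nonneg u v, Real.pi_pos]) (by linarith [angle_le_pi u v])
  rw [← sq_eq_sq₀ (norm_nonneg _) (by positivity)]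
  calc ‖u + v‖ ^ 2 = 2 * ‖u‖ ^ 2 * (1 + Real.cos (angle u v)) := by
        rw [norm_add_sq_real, ← cos_angle_mul_norm_mul_norm, ← h]
        ring
    _ = (2 * ‖u‖ * Real.cos (angle u v / 2)) ^ 2 := by
        rw [mul_pow, Real.cos_sq, mul_div_cancel₀ _ two_ne_zero]
        ring

theorem wide_angle_of_flower_stationarity_general {ι : Type*} [Fintype ι] [Nonempty ι]
    {ε : ℝ} (hε : 0 < ε) {a : ℝ} (ha : 1 < a)
    (haε : Fintype.card ι / (2 * (a - 1)) ≤ Real.sin (ε / 2))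
    {s : ℕ} {u v : E} (hu : ‖u‖ = 1) (hv : ‖v‖ = 1)
    {w : ι → Fin s → E} (hw : ∀ j i, ‖w j i‖ ≤ 1)
    (hstat : a ^ s • (u + v) + ∑ j, ∑ i : Fin s, a ^ (i : ℕ) • w j i = 0) :
    Real.pi - angle u v < ε := by
  refine pi_sub_lt_of_cos_half_lt_sin_half (angle_nonneg u v) (by linarith [Real.pi_pos]) ?_
  calc Real.cos (angle u v / 2) = ‖u + v‖ / 2 := by
        rw [norm_add_eq_two_mul_norm_mul_cos_half_angle (hu.trans hv.symm), hu]
        ring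
    _ < Fintype.card ι / (a - 1) / 2 := by
        gcongr
        exact norm_lt_card_div_of_pow_smul_add_sum_eq_zero ha hw hstat
    _ = Fintype.card ι / (2 * (a - 1)) := by rw [div_div, mul_comm]
    _ ≤ Real.sin (ε / 2) := haε

end InnerProductSpace

/-- Angle form of Lemma 1.1 (second part): under the flower stationarity condition
with weights `a^i`, the petal with the highest nonzero weight `a^s` has an angle
`θ` with `π − θ < ε`. -/
theorem wide_angle_of_flower_stationarity
    {E : Type*} [NormedAddCommGroup E] [InnerProductSpace ℝ E]
    (ε : ℝ) (hε0 : 0 < ε) (hεπ : ε < Real.pi)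
    (a : ℝ) (ha : 3 ≤ a) (ha' : 1 / (a - 1) ≤ Real.sin (ε / 2))
    (s : ℕ) (hs : 1 ≤ s)
    (u v : E) (hu : ‖u‖ = 1) (hv : ‖v‖ = 1)
    (w : Fin 2 → Fin s → E) (hw : ∀ j i, ‖w j i‖ ≤ 1)
    (hstat : a ^ s • (u + v) + ∑ j : Fin 2, ∑ i : Fin s, a ^ (i : ℕ) • w j i = 0) :
    Real.pi - InnerProductGeometry.angle u v < ε := by
  have hcard : (Fintype.card (Fin 2) : ℝ) / (2 * (a - 1)) = 1 / (a - 1) := by simp [← div_div]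
  exact wide_angle_of_flower_stationarity_general hε0 (by linarith) (hcard ▸ ha') hu hv hw hstat
end

section
/- Let E be a real inner product space, let ε ∈ (0, π), and let a be a real number with a·sin(ε/2) > 1. If u₁, u₂, w₁, w₂ are unit vectors in E satisfying (u₁ + u₂) + a·(w₁ + w₂) = 0, then π − θ₂ < ε, where θ₂ ∈ [0, π] is the angle between w₁ and w₂. -/
section AngleNormAdd

open InnerProductGeometry Real

variable {V : Type*} [NormedAddCommGroup V] [InnerProductSpace ℝ V] {x y : V}

theorem cos_half_angle_nonneg (x y : V) : 0 ≤ cos (angle x y / 2) :=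
  cos_nonneg_of_neg_pi_div_two_le_of_le
    (by linarith [angle_nonneg x y, pi_pos]) (by linarith [angle_le_pi x y])

theorem norm_add_eq_two_mul_norm_mul_cos_half_angle_s6 (h : ‖x‖ = ‖y‖) :
    ‖x + y‖ = 2 * ‖x‖ * cos (angle x y / 2) := by
  have hdouble : cos (angle x y) = 2 * cos (angle x y / 2) ^ 2 - 1 := by
    rw [← cos_two_mul, mul_div_cancel₀ _ (two_ne_zero' ℝ)]
  have hcos := cos_half_angle_nonneg x y
  refine (sq_eq_sq₀ (norm_nonneg _) (by positivity)).mp ?_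
  rw [norm_add_sq_real, ← cos_angle_mul_norm_mul_norm, ← h, hdouble]
  ring

theorem norm_add_eq_two_mul_norm_mul_sin_half_pi_sub_angle (h : ‖x‖ = ‖y‖) :
    ‖x + y‖ = 2 * ‖x‖ * sin ((π - angle x y) / 2) := by
  rw [norm_add_eq_two_mul_norm_mul_cos_half_angle_s6 h, sub_div, sin_pi_div_two_sub]

theorem pi_sub_angle_lt_of_norm_add_lt {ε : ℝ} (hε : 0 ≤ ε) (h : ‖x‖ = ‖y‖)
    (hlt : ‖x + y‖ < 2 * ‖x‖ * sin (ε / 2)) : π - angle x y < ε := by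
  contrapose! hlt
  rw [norm_add_eq_two_mul_norm_mul_sin_half_pi_sub_angle h]
  have hsin : sin (ε / 2) ≤ sin ((π - angle x y) / 2) :=
    sin_le_sin_of_le_of_le_pi_div_two (by linarith [pi_pos])
      (by linarith [angle_nonneg x y]) (by linarith)
  gcongr

end AngleNormAdd

/-- Case 2 of the figure-eight example: if `a·sin(ε/2) > 1` and the unit vectors
satisfy `(u₁ + u₂) + a • (w₁ + w₂) = 0`, then the angle `θ₂` between `w₁, w₂`
satisfies `π − θ₂ < ε`. -/
theorem figure_eight_wide_angle
    {E : Type*} [NormedAddCommGroup E] [InnerProductSpace ℝ E]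
    (ε : ℝ) (hε0 : 0 < ε) (hεπ : ε < Real.pi)
    (a : ℝ) (ha : 1 < a * Real.sin (ε / 2))
    (u₁ u₂ w₁ w₂ : E) (hu₁ : ‖u₁‖ = 1) (hu₂ : ‖u₂‖ = 1)
    (hw₁ : ‖w₁‖ = 1) (hw₂ : ‖w₂‖ = 1)
    (hstat : (u₁ + u₂) + a • (w₁ + w₂) = 0) :
    Real.pi - InnerProductGeometry.angle w₁ w₂ < ε := by
  have hsin : 0 < Real.sin (ε / 2) :=
    Real.sin_pos_of_pos_of_lt_pi (by linarith) (by linarith)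
  have ha0 : 0 < a := pos_of_mul_pos_left (one_pos.trans ha) hsin.le
  refine pi_sub_angle_lt_of_norm_add_lt hε0.le (hw₁.trans hw₂.symm) ?_
  refine lt_of_mul_lt_mul_left ?_ ha0.le
  calc
    a * ‖w₁ + w₂‖ = ‖u₁ + u₂‖ := by
      rw [eq_neg_of_add_eq_zero_left hstat, norm_neg, norm_smul_of_nonneg ha0.le]
    _ ≤ 1 + 1 := norm_add_le_of_le hu₁.le hu₂.le
    _ < a * (2 * ‖w₁‖ * Real.sin (ε / 2)) := by rw [hw₁]; linarith
end
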